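/- Assume 2k + 1 ≤ n, A satisfies the (2k+1)-RIP (δ_{2k+1} < 1), every column of A has unit Euclidean norm, and x* satisfies the recovery condition γ_k^RIP ‖e‖₂ < min_{i∈S*}|x*_i|/(2k) − α_k^RIP ‖x*‖₂. Then for every SEA trajectory, for all initializations X⁰ ∈ ℝⁿ and all step sizes η > 0, there exists t_s ≤ T_RIP such that S* ⊆ S^{t_s}, where T_RIP = (2k‖X⁰‖_∞/η + (k+1) min_{i∈S*}|x*_i|) / (min_{i∈S*}|x*_i| − 2k(α_k^RIP ‖x*‖₂ + γ_k^RIP ‖e‖₂)). -/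

import Mathlib

noncomputable section
open Finset Matrix

/-- Support of a vector as a finite set of indices. -/
def spt {d : ℕ} (x : Fin d → ℝ) : Finset (Fin d) :=
  Finset.univ.filter (fun i => x i ≠ 0)

/-- Euclidean (ℓ²) norm of a vector. -/
def l2norm {d : ℕ} (v : Fin d → ℝ) : ℝ :=
  Real.sqrt (∑ i, (v i) ^ 2)

/-- Sup (ℓ∞) norm of a vector. -/
def supNorm {d : ℕ} (v : Fin d → ℝ) : ℝ :=
  ⨆ i, |v i|

/-- The `l`-th restricted isometry constant of `A`: the smallest `δ ≥ 0` such that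
`(1-δ)‖x‖₂² ≤ ‖Ax‖₂² ≤ (1+δ)‖x‖₂²` for every `x` with at most `l` nonzero entries. -/
def ripConst {m n : ℕ} (A : Matrix (Fin m) (Fin n) ℝ) (l : ℕ) : ℝ :=
  sInf {δ : ℝ | 0 ≤ δ ∧ ∀ x : Fin n → ℝ, (spt x).card ≤ l →
    (1 - δ) * ∑ i, (x i) ^ 2 ≤ ∑ j, (A.mulVec x j) ^ 2 ∧
    ∑ j, (A.mulVec x j) ^ 2 ≤ (1 + δ) * ∑ i, (x i) ^ 2}

/-- `α_k^RIP = δ_{2k+1} (1 + δ_{2k} / (1 - δ_k))`. -/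
def alphaRIP {m n : ℕ} (A : Matrix (Fin m) (Fin n) ℝ) (k : ℕ) : ℝ :=
  ripConst A (2 * k + 1) * (1 + ripConst A (2 * k) / (1 - ripConst A k))

/-- `γ_k^RIP = 1 + δ_{2k+1} √(1+δ_k) / (1 - δ_k)`. -/
def gammaRIP {m n : ℕ} (A : Matrix (Fin m) (Fin n) ℝ) (k : ℕ) : ℝ :=
  1 + ripConst A (2 * k + 1) * Real.sqrt (1 + ripConst A k) / (1 - ripConst A k)

/-- The oracle update direction `u^t` (for current support `S`):
`u_i = -η x*_i` for `i ∈ S* \ S` and `u_i = 0` otherwise. -/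
def oracleUpd {n : ℕ} (xstar : Fin n → ℝ) (η : ℝ) (S : Finset (Fin n)) : Fin n → ℝ :=
  fun i => if xstar i ≠ 0 ∧ i ∉ S then -η * xstar i else 0

/-- The gradient noise `b = u - η Aᵀ(A x - y)`. -/
def gradNoise {m n : ℕ} (A : Matrix (Fin m) (Fin n) ℝ) (y : Fin m → ℝ)
    (xstar : Fin n → ℝ) (η : ℝ) (S : Finset (Fin n)) (xt : Fin n → ℝ) : Fin n → ℝ :=
  oracleUpd xstar η S - η • (Aᵀ.mulVec (A.mulVec xt - y))

/-- A SEA trajectory with step size `η` and initialization `X0`. -/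
structure SEATraj {m n : ℕ} (k : ℕ) (A : Matrix (Fin m) (Fin n) ℝ) (y : Fin m → ℝ)
    (η : ℝ) (X0 : Fin n → ℝ) where
  S : ℕ → Finset (Fin n)
  x : ℕ → Fin n → ℝ
  X : ℕ → Fin n → ℝ
  X_init : X 0 = X0
  card_S : ∀ t, (S t).card = k
  sel : ∀ t, ∀ i ∈ S t, ∀ j, j ∉ S t → |X t j| ≤ |X t i|
  x_supp : ∀ t, ∀ i, i ∉ S t → x t i = 0
  x_min : ∀ t, ∀ z : Fin n → ℝ, (∀ i, i ∉ S t → z i = 0) →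
    l2norm (A.mulVec (x t) - y) ≤ l2norm (A.mulVec z - y)
  X_upd : ∀ t, X (t + 1) = X t - η • (Aᵀ.mulVec (A.mulVec (x t) - y))


lemma l2_nonneg {d : ℕ} (v : Fin d → ℝ) : 0 ≤ l2norm v := Real.sqrt_nonneg _

lemma l2_sq {d : ℕ} (v : Fin d → ℝ) : l2norm v ^ 2 = ∑ i, v i ^ 2 :=
  Real.sq_sqrt (Finset.sum_nonneg fun _ _ => sq_nonneg _)

lemma l2_dot {d : ℕ} (v : Fin d → ℝ) : l2norm v ^ 2 = v ⬝ᵥ v := by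
  rw [l2_sq]; simp only [dotProduct, sq]

lemma l2_eq_zero {d : ℕ} {v : Fin d → ℝ} (h : l2norm v = 0) : v = 0 := by
  have h2 := l2_dot v
  rw [h] at h2
  exact dotProduct_self_eq_zero.1 (by linarith)

lemma dot_le {d : ℕ} (u v : Fin d → ℝ) : u ⬝ᵥ v ≤ l2norm u * l2norm v :=
  Real.sum_mul_le_sqrt_mul_sqrt _ _ _

lemma l2_neg {d : ℕ} (u : Fin d → ℝ) : l2norm (-u) = l2norm u := by
  simp [l2norm]

lemma abs_dot_le {d : ℕ} (u v : Fin d → ℝ) : |u ⬝ᵥ v| ≤ l2norm u * l2norm v := by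
  rw [abs_le']
  refine ⟨dot_le u v, ?_⟩
  have := dot_le (-u) v
  rwa [l2_neg, neg_dotProduct] at this

lemma l2_add {d : ℕ} (u v : Fin d → ℝ) : l2norm (u + v) ≤ l2norm u + l2norm v := by
  refine (sq_le_sq₀ (l2_nonneg _) (add_nonneg (l2_nonneg u) (l2_nonneg v))).1 ?_
  rw [l2_dot, add_sq, l2_dot, l2_dot]
  simp only [add_dotProduct, dotProduct_add]
  rw [dotProduct_comm v u]
  linarith [dot_le u v]

def ripSet {m n : ℕ} (A : Matrix (Fin m) (Fin n) ℝ) (l : ℕ) : Set ℝ :=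
  {δ : ℝ | 0 ≤ δ ∧ ∀ x : Fin n → ℝ, (spt x).card ≤ l →
    (1 - δ) * ∑ i, (x i) ^ 2 ≤ ∑ j, (A.mulVec x j) ^ 2 ∧
    ∑ j, (A.mulVec x j) ^ 2 ≤ (1 + δ) * ∑ i, (x i) ^ 2}

lemma ripSet_nonempty {m n : ℕ} (A : Matrix (Fin m) (Fin n) ℝ) (l : ℕ) :
    (ripSet A l).Nonempty := by
  refine ⟨1 + ∑ j, ∑ i, A j i ^ 2, by positivity, fun x _ => ?_⟩
  have h0 : 0 ≤ ∑ i, x i ^ 2 := by positivity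
  have h1 : 0 ≤ ∑ j, ∑ i, A j i ^ 2 := by positivity
  have h2 : 0 ≤ ∑ j, (A.mulVec x j) ^ 2 := by positivity
  have h3 : ∑ j, (A.mulVec x j) ^ 2 ≤ (∑ j, ∑ i, A j i ^ 2) * ∑ i, x i ^ 2 := by
    rw [Finset.sum_mul]
    refine Finset.sum_le_sum fun j _ => ?_
    exact Finset.sum_mul_sq_le_sq_mul_sq Finset.univ (fun i => A j i) x
  constructor <;> nlinarith

lemma ripSet_closed {m n : ℕ} (A : Matrix (Fin m) (Fin n) ℝ) (l : ℕ) :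
    IsClosed (ripSet A l) := by
  unfold ripSet
  simp only [Set.ofPred_and, Set.ofPred_forall]
  refine (isClosed_le continuous_const continuous_id).inter ?_
  refine isClosed_iInter fun x => isClosed_iInter fun _ => ?_
  exact (isClosed_le (by fun_prop) (by fun_prop)).inter (isClosed_le (by fun_prop) (by fun_prop))

lemma ripSet_bdd {m n : ℕ} (A : Matrix (Fin m) (Fin n) ℝ) (l : ℕ) :
    BddBelow (ripSet A l) := ⟨0, fun _ h => h.1⟩

lemma rip_mem {m n : ℕ} (A : Matrix (Fin m) (Fin n) ℝ) (l : ℕ) :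
    ripConst A l ∈ ripSet A l :=
  (ripSet_closed A l).csInf_mem (ripSet_nonempty A l) (ripSet_bdd A l)

lemma rip_mono {m n : ℕ} (A : Matrix (Fin m) (Fin n) ℝ) {l l' : ℕ} (h : l ≤ l') :
    ripConst A l ≤ ripConst A l' :=
  csInf_le (ripSet_bdd A l)
    ⟨(rip_mem A l').1, fun x hx => (rip_mem A l').2 x (hx.trans h)⟩

lemma rip_bounds {m n : ℕ} (A : Matrix (Fin m) (Fin n) ℝ) {l : ℕ} (x : Fin n → ℝ)
    (U : Finset (Fin n)) (hU : U.card ≤ l) (hx : ∀ i, i ∉ U → x i = 0) :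
    (1 - ripConst A l) * (x ⬝ᵥ x) ≤ A *ᵥ x ⬝ᵥ A *ᵥ x ∧
    A *ᵥ x ⬝ᵥ A *ᵥ x ≤ (1 + ripConst A l) * (x ⬝ᵥ x) := by
  have hs : spt x ⊆ U := by
    intro i hi
    by_contra h
    simp [spt] at hi
    exact hi (hx i h)
  have := (rip_mem A l).2 x ((Finset.card_le_card hs).trans hU)
  simpa only [dotProduct, sq] using this

lemma rip_polar {m n : ℕ} (A : Matrix (Fin m) (Fin n) ℝ) {l : ℕ} (u v : Fin n → ℝ)
    (U : Finset (Fin n)) (hU : U.card ≤ l) (hu : ∀ i, i ∉ U → u i = 0)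
    (hv : ∀ i, i ∉ U → v i = 0) :
    |A *ᵥ u ⬝ᵥ A *ᵥ v - u ⬝ᵥ v| ≤ ripConst A l * l2norm u * l2norm v := by
  rcases (l2_nonneg u).eq_or_lt with h | ha
  · rw [l2_eq_zero h.symm]; simp [l2norm]
  rcases (l2_nonneg v).eq_or_lt with h | hb
  · rw [l2_eq_zero h.symm]; simp [l2norm]
  have hua := l2_dot u
  have hvb := l2_dot v
  set a := l2norm u
  set b := l2norm v
  obtain ⟨p1, p2⟩ := rip_bounds A (b • u + a • v) U hU
    (fun i hi => by simp [hu i hi, hv i hi])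
  obtain ⟨q1, q2⟩ := rip_bounds A (b • u - a • v) U hU
    (fun i hi => by simp [hu i hi, hv i hi])
  simp only [mulVec_add, mulVec_sub, mulVec_smul, add_dotProduct, dotProduct_add,
    sub_dotProduct, dotProduct_sub, smul_dotProduct, dotProduct_smul, smul_eq_mul] at p1 p2 q1 q2
  rw [dotProduct_comm v u, dotProduct_comm (A *ᵥ v) (A *ᵥ u)] at p1 p2 q1 q2
  rw [← hua, ← hvb] at p1 p2 q1 q2
  set δ := ripConst A l
  have hab : 0 < a * b := mul_pos ha hb
  rw [abs_le]
  constructor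
  · refine le_of_mul_le_mul_left ?_ hab
    nlinarith
  · refine le_of_mul_le_mul_left ?_ hab
    nlinarith

lemma normal_eq {m n : ℕ} (A : Matrix (Fin m) (Fin n) ℝ) (y : Fin m → ℝ)
    (S : Finset (Fin n)) (x : Fin n → ℝ) (hx : ∀ i, i ∉ S → x i = 0)
    (hmin : ∀ z : Fin n → ℝ, (∀ i, i ∉ S → z i = 0) →
      l2norm (A.mulVec x - y) ≤ l2norm (A.mulVec z - y))
    (v : Fin n → ℝ) (hv : ∀ i, i ∉ S → v i = 0) :
    A *ᵥ v ⬝ᵥ (A *ᵥ x - y) = 0 := by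
  set r := A *ᵥ x - y with hr
  have key : ∀ s : ℝ, 0 ≤ 2 * s * (A *ᵥ v ⬝ᵥ r) + s ^ 2 * (A *ᵥ v ⬝ᵥ A *ᵥ v) := by
    intro s
    have h := hmin (x + s • v) (fun i hi => by simp [hx i hi, hv i hi])
    have h2 := pow_le_pow_left₀ (l2_nonneg _) h 2
    rw [l2_dot, l2_dot] at h2
    have e : A *ᵥ (x + s • v) - y = r + s • (A *ᵥ v) := by
      rw [mulVec_add, mulVec_smul, hr]; abel
    rw [e] at h2
    simp only [add_dotProduct, dotProduct_add, smul_dotProduct, dotProduct_smul, smul_eq_mul] at h2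
    rw [dotProduct_comm r (A *ᵥ v)] at h2
    linarith
  have hq : 0 ≤ A *ᵥ v ⬝ᵥ A *ᵥ v := by rw [← l2_dot]; positivity
  set p := A *ᵥ v ⬝ᵥ r
  set q := A *ᵥ v ⬝ᵥ A *ᵥ v
  have h := key (-p / (q + 1))
  have hq1 : 0 < q + 1 := by linarith
  have e : 2 * (-p / (q + 1)) * p + (-p / (q + 1)) ^ 2 * q
      = -(p ^ 2 * (q + 2)) / (q + 1) ^ 2 := by field_simp; ring
  rw [e, le_div_iff₀ (by positivity)] at h
  have : p ^ 2 ≤ 0 := by nlinarith [mul_nonneg (sq_nonneg p) hq]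
  exact pow_eq_zero_iff (two_ne_zero) |>.1 (le_antisymm this (sq_nonneg p))

lemma l2_restrict {d : ℕ} (x : Fin d → ℝ) (P : Fin d → Prop) [DecidablePred P] :
    l2norm (fun i => if P i then x i else 0) ≤ l2norm x := by
  apply Real.sqrt_le_sqrt
  refine Finset.sum_le_sum fun i _ => ?_
  dsimp only
  split_ifs
  · exact le_rfl
  · simpa using sq_nonneg (x i)

lemma z_bound {m n k : ℕ} (A : Matrix (Fin m) (Fin n) ℝ) (hδ : ripConst A k < 1)
    (xs : Fin n → ℝ) (hs : (spt xs).card ≤ k) (e : Fin m → ℝ)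
    (S : Finset (Fin n)) (hS : S.card = k) (x : Fin n → ℝ) (hx : ∀ i, i ∉ S → x i = 0)
    (hmin : ∀ z : Fin n → ℝ, (∀ i, i ∉ S → z i = 0) →
      l2norm (A.mulVec x - (A *ᵥ xs + e)) ≤ l2norm (A.mulVec z - (A *ᵥ xs + e))) :
    l2norm (xs - x) ≤ (1 + ripConst A (2 * k) / (1 - ripConst A k)) * l2norm xs +
      Real.sqrt (1 + ripConst A k) / (1 - ripConst A k) * l2norm e := by
  set w : Fin n → ℝ := fun i => if i ∉ S then xs i else 0 with hw
  set v : Fin n → ℝ := fun i => if i ∈ S then xs i - x i else 0 with hv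
  have hz : xs - x = v + w := by
    funext i
    by_cases h : i ∈ S <;> simp [hv, hw, h, hx]
  have hwn : l2norm w ≤ l2norm xs := l2_restrict xs _
  have hvS : ∀ i, i ∉ S → v i = 0 := fun i hi => by simp [hv, hi]
  have hne := normal_eq A _ S x hx hmin v hvS
  have e1 : A *ᵥ x - (A *ᵥ xs + e) = -(A *ᵥ v) - A *ᵥ w - e := by
    have : A *ᵥ (xs - x) = A *ᵥ v + A *ᵥ w := by rw [hz, mulVec_add]
    rw [mulVec_sub] at this
    have h2 : A *ᵥ v = A *ᵥ xs - A *ᵥ x - A *ᵥ w := by rw [this]; abel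
    rw [h2]; abel
  rw [e1] at hne
  simp only [dotProduct_sub, dotProduct_neg] at hne
  have hvw : v ⬝ᵥ w = 0 := by
    refine Finset.sum_eq_zero fun i _ => ?_
    by_cases h : i ∈ S <;> simp [hv, hw, h]
  have hpol := rip_polar A (l := 2 * k) v w (S ∪ spt xs)
    ((Finset.card_union_le _ _).trans (by omega))
    (fun i hi => hvS i (fun h => hi (Finset.mem_union_left _ h)))
    (fun i hi => by
      have : xs i = 0 := by
        by_contra h
        exact hi (Finset.mem_union_right _ (by simp [spt, h]))
      simp [hw, this])
  rw [hvw, sub_zero] at hpol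
  obtain ⟨b1, b2⟩ := rip_bounds A (l := k) v S hS.le hvS
  have hAv : l2norm (A *ᵥ v) ≤ Real.sqrt (1 + ripConst A k) * l2norm v := by
    apply Real.sqrt_le_iff.2
    refine ⟨mul_nonneg (Real.sqrt_nonneg _) (l2_nonneg _), ?_⟩
    rw [mul_pow, Real.sq_sqrt (by linarith [(rip_mem A k).1]), ← l2_sq, l2_dot, l2_dot]
    exact b2
  have hce := abs_dot_le (A *ᵥ v) e
  have hce2 : l2norm (A *ᵥ v) * l2norm e ≤ Real.sqrt (1 + ripConst A k) * l2norm v * l2norm e :=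
    mul_le_mul_of_nonneg_right hAv (l2_nonneg _)
  have hδ2 := (rip_mem A (2 * k)).1
  have hpw : ripConst A (2 * k) * l2norm v * l2norm w ≤ ripConst A (2 * k) * l2norm v * l2norm xs :=
    mul_le_mul_of_nonneg_left hwn (mul_nonneg hδ2 (l2_nonneg _))
  rw [← l2_dot] at b1
  have hmain : (1 - ripConst A k) * l2norm v ^ 2 ≤
      l2norm v * (ripConst A (2 * k) * l2norm xs + Real.sqrt (1 + ripConst A k) * l2norm e) := by
    have := (abs_le.1 hpol).1
    have := (abs_le.1 hce).1
    linarith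
  have h1 : 0 < 1 - ripConst A k := by linarith
  have hvb : l2norm v ≤ (ripConst A (2 * k) * l2norm xs +
      Real.sqrt (1 + ripConst A k) * l2norm e) / (1 - ripConst A k) := by
    rw [le_div_iff₀ h1]
    rcases (l2_nonneg v).eq_or_lt with h | h
    · rw [← h, zero_mul]
      have := l2_nonneg xs
      have := l2_nonneg e
      positivity
    · refine le_of_mul_le_mul_left ?_ h
      linarith
  rw [hz]
  have ht := l2_add v w
  have : (1 + ripConst A (2 * k) / (1 - ripConst A k)) * l2norm xs +
      Real.sqrt (1 + ripConst A k) / (1 - ripConst A k) * l2norm e =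
      l2norm xs + (ripConst A (2 * k) * l2norm xs +
      Real.sqrt (1 + ripConst A k) * l2norm e) / (1 - ripConst A k) := by
    field_simp
    ring
  linarith

lemma grad_in {m n : ℕ} (A : Matrix (Fin m) (Fin n) ℝ) (y : Fin m → ℝ)
    (S : Finset (Fin n)) (x : Fin n → ℝ) (hx : ∀ i, i ∉ S → x i = 0)
    (hmin : ∀ z : Fin n → ℝ, (∀ i, i ∉ S → z i = 0) →
      l2norm (A.mulVec x - y) ≤ l2norm (A.mulVec z - y)) (i : Fin n) (hi : i ∈ S) :
    (Aᵀ *ᵥ (A *ᵥ x - y)) i = 0 := by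
  have := normal_eq A y S x hx hmin (Pi.single i 1) (fun j hj => by
    have : j ≠ i := fun h => hj (h ▸ hi)
    simp [this])
  rw [mulVec_single_one] at this
  exact this

lemma grad_out {m n k : ℕ} (A : Matrix (Fin m) (Fin n) ℝ) (hδ : ripConst A k < 1)
    (hcols : ∀ j : Fin n, ∑ i, (A i j) ^ 2 = 1)
    (xs : Fin n → ℝ) (hs : (spt xs).card ≤ k) (e : Fin m → ℝ)
    (S : Finset (Fin n)) (hS : S.card = k) (x : Fin n → ℝ) (hx : ∀ i, i ∉ S → x i = 0)
    (hmin : ∀ z : Fin n → ℝ, (∀ i, i ∉ S → z i = 0) →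
      l2norm (A.mulVec x - (A *ᵥ xs + e)) ≤ l2norm (A.mulVec z - (A *ᵥ xs + e)))
    (i : Fin n) (hi : i ∉ S) :
    |-(Aᵀ *ᵥ (A *ᵥ x - (A *ᵥ xs + e))) i - xs i| ≤
      alphaRIP A k * l2norm xs + gammaRIP A k * l2norm e := by
  have hzb := z_bound A hδ xs hs e S hS x hx hmin
  have hpol := rip_polar A (l := 2 * k + 1) (Pi.single i 1) (xs - x) (insert i (S ∪ spt xs))
    ((Finset.card_insert_le _ _).trans
      (by have := Finset.card_union_le S (spt xs); omega))
    (fun j hj => by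
      have : j ≠ i := fun h => hj (h ▸ Finset.mem_insert_self _ _)
      simp [this])
    (fun j hj => by
      have h1 : j ∉ S := fun h => hj (Finset.mem_insert_of_mem (Finset.mem_union_left _ h))
      have : xs j = 0 := by
        by_contra h
        exact hj (Finset.mem_insert_of_mem (Finset.mem_union_right _ (by simp [spt, h])))
      simp [this, hx j h1])
  have hn1 : l2norm (Pi.single i 1 : Fin n → ℝ) = 1 := by
    have : ∑ j, (Pi.single i 1 : Fin n → ℝ) j ^ 2 = 1 := by
      rw [Finset.sum_eq_single i] <;> simp +contextual
    rw [l2norm, this, Real.sqrt_one]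
  rw [hn1, single_one_dotProduct, mulVec_single_one, Pi.sub_apply, hx i hi, sub_zero] at hpol
  have hcn : l2norm (A.col i) = 1 := by
    have : ∑ j, (A.col i) j ^ 2 = 1 := hcols i
    rw [l2norm, this, Real.sqrt_one]
  have hce := abs_dot_le (A.col i) e
  rw [hcn, one_mul] at hce
  have hg : -(Aᵀ *ᵥ (A *ᵥ x - (A *ᵥ xs + e))) i = A.col i ⬝ᵥ A *ᵥ (xs - x) + A.col i ⬝ᵥ e := by
    change -(A.col i ⬝ᵥ (A *ᵥ x - (A *ᵥ xs + e))) = _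
    rw [mulVec_sub]
    simp only [dotProduct_sub, dotProduct_add]
    ring
  rw [hg]
  have hd := (rip_mem A (2 * k + 1)).1
  have hm := mul_le_mul_of_nonneg_left hzb hd
  have : alphaRIP A k * l2norm xs + gammaRIP A k * l2norm e = ripConst A (2 * k + 1) *
      ((1 + ripConst A (2 * k) / (1 - ripConst A k)) * l2norm xs +
      Real.sqrt (1 + ripConst A k) / (1 - ripConst A k) * l2norm e) + l2norm e := by
    unfold alphaRIP gammaRIP
    ring
  rw [this]
  rw [abs_le] at *
  constructor <;> linarith

/-- Abstract dynamics. -/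
lemma dyn {n k : ℕ} (hk : 0 < k) (xs : Fin n → ℝ) (T : Finset (Fin n)) (hT : T.card ≤ k)
    (hT0 : ∀ i, i ∉ T → xs i = 0) (M ε η B : ℝ) (hM : ∀ i ∈ T, M ≤ |xs i|) (hε : 0 ≤ ε)
    (hMε : 2 * k * ε < M) (hη : 0 < η)
    (S : ℕ → Finset (Fin n)) (X : ℕ → Fin n → ℝ) (g : ℕ → Fin n → ℝ)
    (hS : ∀ t, (S t).card = k)
    (sel : ∀ t, ∀ i ∈ S t, ∀ j, j ∉ S t → |X t j| ≤ |X t i|)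
    (hB : ∀ i, |X 0 i| ≤ B)
    (upd : ∀ t i, X (t + 1) i = X t i + η * g t i)
    (gin : ∀ t, ∀ i ∈ S t, g t i = 0)
    (gout : ∀ t, ∀ i, i ∉ S t → |g t i - xs i| ≤ ε)
    (N : ℕ) (hN : ∀ t, t < N → ¬ T ⊆ S t) :
    (N : ℝ) * (M - 2 * k * ε) ≤ 2 * k * B / η + k * M := by
  classical
  have hk1 : (1 : ℝ) ≤ k := by exact_mod_cast hk
  have hMe : 0 < M - ε := by nlinarith
  set c : Fin n → ℕ → ℝ := fun i t => ∑ s ∈ Finset.range t, if i ∈ S s then (0 : ℝ) else 1 with hc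
  have hc0 : ∀ i, c i 0 = 0 := fun i => by simp [hc]
  have hcs : ∀ i t, c i (t + 1) = c i t + if i ∈ S t then (0 : ℝ) else 1 := fun i t => by
    simp only [hc, Finset.sum_range_succ]
  have hB0 : ∀ i : Fin n, 0 ≤ B := fun i => (abs_nonneg _).trans (hB i)
  have P1 : ∀ t : ℕ, ∀ j, j ∉ T → |X t j| ≤ B + t * (η * ε) := by
    intro t
    induction t with
    | zero => intro j _; simpa using hB j
    | succ t ih =>
      intro j hj
      rw [upd]
      have h1 := ih j hj
      have h2 : |g t j| ≤ ε := by
        by_cases h : j ∈ S t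
        · rw [gin t j h]; simpa using hε
        · have := gout t j h
          rwa [hT0 j hj, sub_zero] at this
      have h3 : |η * g t j| ≤ η * ε := by
        rw [abs_mul, abs_of_pos hη]
        exact mul_le_mul_of_nonneg_left h2 hη.le
      have := abs_add_le (X t j) (η * g t j)
      push_cast
      linarith
  have P2 : ∀ t : ℕ, ∀ i ∈ T, -B + c i t * (η * (M - ε)) ≤ SignType.sign (xs i) * X t i := by
    intro t i hi
    have hMi := hM i hi
    have hM0 : 0 < M := by linarith
    induction t with
    | zero =>
      rw [hc0]
      have := abs_le.1 (hB i)
      rcases lt_trichotomy (xs i) 0 with h | h | h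
      · simp [sign_neg h]; linarith
      · simp [h] at hMi; linarith
      · simp [sign_pos h]; linarith
    | succ t ih =>
      rw [upd, hcs]
      by_cases h : i ∈ S t
      · simp only [gin t i h, h, if_true]; simpa using ih
      · simp only [h, if_false]
        have hg := abs_le.1 (gout t i h)
        have : M - ε ≤ SignType.sign (xs i) * g t i := by
          rcases lt_trichotomy (xs i) 0 with h | h | h
          · rw [abs_of_neg h] at hMi
            simp [sign_neg h]; linarith
          · simp [h] at hMi; linarith
          · rw [abs_of_pos h] at hMi
            simp [sign_pos h]; linarith
        have := mul_le_mul_of_nonneg_left this hη.le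
        linarith
  have P3 : ∀ t : ℕ, ∀ i ∈ T,
      c i t * (η * (M - ε)) ≤ η * (M - ε) + 2 * B + t * (η * ε) := by
    intro t i hi
    have hp : 0 < η * (M - ε) := mul_pos hη hMe
    have hp2 : 0 ≤ η * ε := mul_nonneg hη.le hε
    induction t with
    | zero => rw [hc0]; have := hB0 i; simp; linarith
    | succ t ih =>
      rw [hcs]
      by_cases h : i ∈ S t
      · simp only [h, if_true]; push_cast; linarith
      · simp only [h, if_false]
        have hj : ∃ j ∈ S t, j ∉ T := by
          by_contra! hcon
          have : S t = T := Finset.eq_of_subset_of_card_le hcon (by rw [hS]; exact hT)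
          exact h (this ▸ hi)
        obtain ⟨j, hjS, hjT⟩ := hj
        have h1 := sel t j hjS i h
        have h2 := P1 t j hjT
        have h3 := P2 t i hi
        have h4 : SignType.sign (xs i) * X t i ≤ |X t i| := by
          rcases lt_trichotomy (xs i) 0 with h | h | h
          · simp [sign_neg h]; exact neg_le_abs _
          · simp [h]
          · simp [sign_pos h]; exact le_abs_self _
        push_cast
        linarith
  have P4 : ∀ t : ℕ, t ≤ N → (t : ℝ) ≤ ∑ i ∈ T, c i t := by
    intro t
    induction t with
    | zero => intro _; simp [hc0]
    | succ t ih =>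
      intro ht
      have h1 := ih (by omega)
      obtain ⟨i, hiT, hiS⟩ := Finset.not_subset.1 (hN t (by omega))
      simp only [hcs, Finset.sum_add_distrib]
      have : (1 : ℝ) ≤ ∑ i ∈ T, if i ∈ S t then (0 : ℝ) else 1 := by
        have := Finset.single_le_sum (f := fun i => if i ∈ S t then (0 : ℝ) else 1) (s := T)
          (fun i _ => by split_ifs <;> norm_num) hiT
        simpa [hiS] using this
      push_cast
      linarith
  rcases Nat.eq_zero_or_pos N with h0 | hNpos
  · subst h0
    obtain ⟨i, _⟩ : (S 0).Nonempty := Finset.card_pos.1 (by rw [hS]; exact hk)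
    have := hB0 i
    have hM0 : 0 < M := by linarith
    simp; positivity
  obtain ⟨i0, hi0, _⟩ := Finset.not_subset.1 (hN 0 hNpos)
  have hB1 := hB0 i0
  have h4 := P4 N le_rfl
  have h3 : (∑ i ∈ T, c i N) * (η * (M - ε)) ≤
      k * (η * (M - ε) + 2 * B + N * (η * ε)) := by
    rw [Finset.sum_mul]
    refine (Finset.sum_le_sum fun i hi => P3 N i hi).trans ?_
    rw [Finset.sum_const, nsmul_eq_mul]
    have : (T.card : ℝ) ≤ k := by exact_mod_cast hT
    exact mul_le_mul_of_nonneg_right this (by positivity)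
  have hp : 0 < η * (M - ε) := mul_pos hη hMe
  have h5 := mul_le_mul_of_nonneg_right h4 hp.le
  have h6 : (N : ℝ) * (M - ε) ≤ k * ((M - ε) + 2 * (B / η) + N * ε) := by
    refine le_of_mul_le_mul_left ?_ hη
    have : η * (k * ((M - ε) + 2 * (B / η) + N * ε)) =
      k * (η * (M - ε) + 2 * B + N * (η * ε)) := by field_simp
    linarith
  have h7 : 0 ≤ (N : ℝ) * ε * (k - 1) := mul_nonneg (by positivity) (by linarith)
  have h8 : 0 ≤ k * ε := by positivity
  have h9 : 2 * k * B / η = k * (2 * (B / η)) := by ring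
  rw [h9]
  nlinarith

/-- Recovery in the RIP case: under the recovery condition (RC_RIP), SEA visits
the true support within `T_RIP` iterations. -/
theorem sea_recovery_RIP {m n k : ℕ} (hm : 0 < m) (hk : 0 < k)
    (hkn : 2 * k + 1 ≤ n)
    (A : Matrix (Fin m) (Fin n) ℝ) (hRIP : ripConst A (2 * k + 1) < 1)
    (hcols : ∀ j : Fin n, ∑ i, (A i j) ^ 2 = 1)
    (xstar : Fin n → ℝ) (hspars : (spt xstar).card ≤ k) (hne : (spt xstar).Nonempty)
    (e : Fin m → ℝ) (y : Fin m → ℝ) (hy : y = A.mulVec xstar + e)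
    (hRC : gammaRIP A k * l2norm e <
      ((spt xstar).inf' hne (fun i => |xstar i|)) / (2 * k) -
        alphaRIP A k * l2norm xstar)
    (η : ℝ) (hη : 0 < η) (X0 : Fin n → ℝ)
    (traj : SEATraj k A y η X0) :
    ∃ ts : ℕ,
      (ts : ℝ) ≤ (2 * k * supNorm X0 / η
          + (k + 1) * (spt xstar).inf' hne (fun i => |xstar i|)) /
        ((spt xstar).inf' hne (fun i => |xstar i|) -
          2 * k * (alphaRIP A k * l2norm xstar + gammaRIP A k * l2norm e)) ∧
      spt xstar ⊆ traj.S ts := by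
  have hk1 : (1 : ℝ) ≤ k := by exact_mod_cast hk
  have hδk : ripConst A k < 1 := (rip_mono A (by omega)).trans_lt hRIP
  have d1 := (rip_mem A (2 * k + 1)).1
  have d2 := (rip_mem A (2 * k)).1
  have d3 := (rip_mem A k).1
  have d4 : 0 ≤ (1 - ripConst A k) := by linarith
  have ha : 0 ≤ alphaRIP A k := by unfold alphaRIP; positivity
  have hg : 0 ≤ gammaRIP A k := by unfold gammaRIP; positivity
  set M := (spt xstar).inf' hne (fun i => |xstar i|) with hMdef
  set ε := alphaRIP A k * l2norm xstar + gammaRIP A k * l2norm e with hεdef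
  have hε : 0 ≤ ε := add_nonneg (mul_nonneg ha (l2_nonneg _)) (mul_nonneg hg (l2_nonneg _))
  have hMε : 2 * k * ε < M := by
    have h : ε < M / (2 * k) := by linarith
    rw [lt_div_iff₀ (by positivity)] at h
    linarith
  have hM0 : 0 < M := lt_of_le_of_lt (by positivity) hMε
  have hD : 0 < M - 2 * k * ε := by linarith
  have hB : ∀ i, |X0 i| ≤ supNorm X0 := fun i =>
    le_ciSup (f := fun i => |X0 i|) (Set.finite_range _).bddAbove i
  have hB0 : 0 ≤ supNorm X0 := Real.iSup_nonneg fun _ => abs_nonneg _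
  set R := (2 * k * supNorm X0 / η + (k + 1) * M) / (M - 2 * k * ε) with hR
  have hR0 : 0 ≤ R := by positivity
  by_contra hcon
  push Not at hcon
  have hdyn := dyn hk xstar (spt xstar) hspars (fun i hi => by simpa [spt] using hi) M ε η
    (supNorm X0) (fun i hi => Finset.inf'_le _ hi) hε hMε hη traj.S traj.X
    (fun t i => -(Aᵀ *ᵥ (A *ᵥ (traj.x t) - y)) i) traj.card_S traj.sel
    (fun i => by rw [traj.X_init]; exact hB i)
    (fun t i => by rw [traj.X_upd]; simp; ring)
    (fun t i hi => by
      rw [grad_in A y (traj.S t) (traj.x t) (traj.x_supp t) (traj.x_min t) i hi, neg_zero])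
    (fun t i hi => by
      subst hy
      exact grad_out A hδk hcols xstar hspars e (traj.S t) (traj.card_S t) (traj.x t)
        (traj.x_supp t) (traj.x_min t) i hi)
    (⌊R⌋₊ + 1)
    (fun t ht => hcon t ((Nat.cast_le.2 (Nat.lt_succ_iff.1 ht)).trans (Nat.floor_le hR0)))
  have h1 : R < (⌊R⌋₊ + 1 : ℕ) := by exact_mod_cast Nat.lt_floor_add_one R
  rw [hR, div_lt_iff₀ hD, ← hR] at h1
  linarith

end
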